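/- A well-formed complete history H of read/write register operations is linearizable if and only if, for every register x, the register subhistory H|x is linearizable. -/

import Mathlib

/-- An event of a read/write register operation execution: it is either the
invocation (`isInv = true`) or the response (`isInv = false`) of an operation,
identified by an operation identifier `op`, occurring at process `proc`,
targeting register `reg`.  `isRead` tells whether the operation is a read or a
write, and `value` is the value written (for a write) resp. returned (for a
read). -/
structure Event where
  op : ℕ
  proc : ℕ
  reg : ℕ
  isRead : Bool
  value : ℤ
  isInv : Bool
deriving DecidableEq

/-- A history is a finite sequence of events. -/
abbrev Hist := List Event

/-- `H|p`: the process subhistory of `H`, i.e. the subsequence of events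
occurring at process `p`. -/
def procSub (H : Hist) (p : ℕ) : Hist := H.filter (fun e => e.proc = p)

/-- `H|x`: the register subhistory of `H`, i.e. the subsequence of events of
operations targeting register `x`. -/
def regSub (H : Hist) (x : ℕ) : Hist := H.filter (fun e => e.reg = x)

/-- `e2` is the response event matching the invocation event `e1`. -/
def Matches (e1 e2 : Event) : Prop :=
  e1.isInv = true ∧ e2.isInv = false ∧ e1.op = e2.op ∧ e1.proc = e2.proc ∧
    e1.reg = e2.reg ∧ e1.isRead = e2.isRead ∧ e1.value = e2.value

/-- A history is sequential if its first event is an invocation and every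
invocation event (except possibly the last event) is immediately followed by
the matching response event. -/
inductive IsSequential : Hist → Prop
  | nil : IsSequential []
  | single (e : Event) : e.isInv = true → IsSequential [e]
  | cons (e1 e2 : Event) (rest : Hist) :
      Matches e1 e2 → IsSequential rest → IsSequential (e1 :: e2 :: rest)

/-- No two distinct events of a history are the invocation of the same
operation, nor the response of the same operation. -/
def UniqueEvents (H : Hist) : Prop :=
  H.Pairwise (fun e1 e2 => ¬(e1.op = e2.op ∧ e1.isInv = e2.isInv))

/-- All events of one and the same operation agree on the process, register,
operation type and value. -/
def Coherent (H : Hist) : Prop :=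
  ∀ e1 ∈ H, ∀ e2 ∈ H, e1.op = e2.op →
    e1.proc = e2.proc ∧ e1.reg = e2.reg ∧ e1.isRead = e2.isRead ∧ e1.value = e2.value

/-- A history is well-formed if every process subhistory is sequential
(together with the bookkeeping conditions making operations well-defined). -/
def WellFormed (H : Hist) : Prop :=
  UniqueEvents H ∧ Coherent H ∧ ∀ p : ℕ, IsSequential (procSub H p)

/-- A history is complete if every invocation event has a matching response
event. -/
def Complete (H : Hist) : Prop :=
  ∀ e ∈ H, e.isInv = true → ∃ e' ∈ H, Matches e e'

/-- `H ≃ H'`: two histories are equivalent iff `H|p = H'|p` for every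
process `p`. -/
def HEquiv (H H' : Hist) : Prop := ∀ p : ℕ, procSub H p = procSub H' p

/-- Operation `o1` precedes operation `o2` in history `H`
(`o1 <_H o2`): the response event of `o1` occurs before the invocation event
of `o2` in `H`. -/
def OpBefore (H : Hist) (o1 o2 : ℕ) : Prop :=
  ∃ i j : Fin H.length, i < j ∧
    (H.get i).op = o1 ∧ (H.get i).isInv = false ∧
    (H.get j).op = o2 ∧ (H.get j).isInv = true

/-- A sequential history is legal if every read of a register returns the
value written by the closest preceding write to that register, or the initial
value `0` if no such write exists. -/
def Legal (S : Hist) : Prop :=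
  ∀ k : Fin S.length, (S.get k).isInv = true → (S.get k).isRead = true →
    ((∃ j : Fin S.length, j < k ∧ (S.get j).isInv = true ∧ (S.get j).isRead = false ∧
        (S.get j).reg = (S.get k).reg ∧ (S.get j).value = (S.get k).value ∧
        ∀ l : Fin S.length, j < l → l < k → (S.get l).isInv = true →
          (S.get l).isRead = false → (S.get l).reg ≠ (S.get k).reg) ∨
      ((S.get k).value = 0 ∧
        ∀ j : Fin S.length, j < k → (S.get j).isInv = true →
          (S.get j).isRead = false → (S.get j).reg ≠ (S.get k).reg))

/-- `SC H`: history `H` is sequentially consistent iff there is a legal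
sequential history `S` with `S ≃ H`. -/
def SC (H : Hist) : Prop :=
  ∃ S : Hist, IsSequential S ∧ Legal S ∧ HEquiv S H

/-- `LIN H`: history `H` is linearizable iff there is a legal sequential
history `S` with `S ≃ H` such that `o1 <_H o2` implies `o1 <_S o2` for all
operations `o1, o2` of `H`. -/
def LIN (H : Hist) : Prop :=
  ∃ S : Hist, IsSequential S ∧ Legal S ∧ HEquiv S H ∧
    ∀ o1 o2 : ℕ, OpBefore H o1 o2 → OpBefore S o1 o2

/-!
Identify an operation with its invocation event. In the linearization of `H|x`, assign to each
operation `a` as linearization point the latest invocation time in `H` of an operation that is not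
after `a`. This point lies between the invocation and the response of `a`: were it past the
response, an operation not after `a` would start after `a` has returned, contradicting real-time
order. Sorting all operations by linearization point, with ties broken by the linearization of the
common register, restricts to the given linearization on each register, so it is legal. It also
respects the real-time order of `H`, which determines the order of operations within each process.
-/

open List

section Lists

variable {α β : Type*} {l : List α} {a b : α}

lemma pair_sublist_or_of_mem (ha : a ∈ l) (hb : b ∈ l) (hab : a ≠ b) :
    [a, b] <+ l ∨ [b, a] <+ l := by
  have : Std.Symm fun a b => [a, b] <+ l ∨ [b, a] <+ l := ⟨fun _ _ => Or.symm⟩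
  have hpair : l.Pairwise fun a b => [a, b] <+ l ∨ [b, a] <+ l :=
    pairwise_iff_forall_sublist.2 Or.inl
  exact hpair.forall ha hb hab

lemma pair_sublist_filter_iff {p : α → Bool} :
    [a, b] <+ l.filter p ↔ [a, b] <+ l ∧ p a = true ∧ p b = true := by
  constructor
  · intro h
    have hmem : ∀ c ∈ [a, b], p c = true := fun c hc => (mem_filter.1 (h.subset hc)).2
    exact ⟨h.trans filter_sublist, hmem a (by simp), hmem b (by simp)⟩
  · rintro ⟨h, ha, hb⟩
    simpa [ha, hb] using h.filter p

lemma pair_sublist_iff_lt [LinearOrder β] {f : α → β} (hl : l.Pairwise (f · < f ·))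
    (ha : a ∈ l) (hb : b ∈ l) : [a, b] <+ l ↔ f a < f b := by
  have lt_of_sublist {a b : α} : [a, b] <+ l → f a < f b := pairwise_iff_forall_sublist.1 hl
  refine ⟨lt_of_sublist, fun hab => ?_⟩
  have hne : a ≠ b := fun h => hab.ne (congrArg f h)
  exact (pair_sublist_or_of_mem ha hb hne).resolve_right fun h => hab.asymm (lt_of_sublist h)

lemma pair_sublist_iff_idxOf_lt [DecidableEq α] (hl : l.Nodup) (ha : a ∈ l) (hb : b ∈ l) :
    [a, b] <+ l ↔ l.idxOf a < l.idxOf b := by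
  refine pair_sublist_iff_lt (f := (l.idxOf ·)) (pairwise_iff_getElem.2 ?_) ha hb
  intro i j hi hj hij
  rwa [hl.idxOf_getElem i hi, hl.idxOf_getElem j hj]

lemma exists_pairwise_lt_of_injOn [LinearOrder β] {f : α → β} {s : Finset α}
    (hf : Set.InjOn f s) : ∃ m : List α, (∀ a, a ∈ m ↔ a ∈ s) ∧ m.Pairwise (f · < f ·) := by
  have : Std.Total fun a b => f a ≤ f b := ⟨fun a b => le_total (f a) (f b)⟩
  have : IsTrans α fun a b => f a ≤ f b := ⟨fun _ _ _ => le_trans⟩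
  let m := s.toList.insertionSort (f · ≤ f ·)
  have mem_m (a : α) : a ∈ m ↔ a ∈ s := by simp [m]
  have nodup_m : m.Nodup := (perm_insertionSort _ _).nodup_iff.2 s.nodup_toList
  refine ⟨m, mem_m, ((pairwise_insertionSort _ _).and nodup_m).imp_of_mem ?_⟩
  intro a b ha hb hab
  exact hab.1.lt_of_ne fun h => hab.2 (hf ((mem_m a).1 ha) ((mem_m b).1 hb) h)

lemma eq_of_pairwise_lt_of_mem_iff [Preorder β] {f : α → β} {l₁ l₂ : List α}
    (h₁ : l₁.Pairwise (f · < f ·)) (h₂ : l₂.Pairwise (f · < f ·))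
    (hmem : ∀ a, a ∈ l₁ ↔ a ∈ l₂) : l₁ = l₂ := by
  have : Std.Antisymm fun a b => f a < f b := ⟨fun _ _ h h' => absurd h' h.asymm⟩
  have : Std.Irrefl fun a b => f a < f b := ⟨fun a => lt_irrefl (f a)⟩
  exact h₁.eq_of_mem_iff h₂ hmem

end Lists

section LinearizationKey

variable {α ι τ ρ : Type*} [DecidableEq ι] [LinearOrder τ] [OrderBot τ] [LinearOrder ρ]
  {s : Finset α} {reg : α → ι} {rank : α → ρ} {inv res : α → τ} {a b : α}

/-- The linearization point of an operation `a` among the operations `s`, where `rank` orders the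
operations on each register and `inv` is the invocation time: the latest invocation time of an
operation on the register of `a` that is ranked no higher than `a`. -/
def linPoint (s : Finset α) (reg : α → ι) (rank : α → ρ) (inv : α → τ) (a : α) : τ :=
  {b ∈ s | reg b = reg a ∧ rank b ≤ rank a}.sup inv

/-- The sorting key that merges the orders of the single registers: operations are compared by
linearization point, and ties, which only occur within one register, are broken by `rank`. -/
def linKey (s : Finset α) (reg : α → ι) (rank : α → ρ) (inv : α → τ) (a : α) : τ ×ₗ ρ :=
  toLex (linPoint s reg rank inv a, rank a)

lemma exists_linPoint_eq (ha : a ∈ s) :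
    ∃ b ∈ s, reg b = reg a ∧ rank b ≤ rank a ∧ linPoint s reg rank inv a = inv b := by
  have hne : {b ∈ s | reg b = reg a ∧ rank b ≤ rank a}.Nonempty := ⟨a, by simp [ha]⟩
  obtain ⟨b, hb, hsup⟩ := Finset.exists_mem_eq_sup _ hne inv
  obtain ⟨hbs, hreg, hrank⟩ := Finset.mem_filter.1 hb
  exact ⟨b, hbs, hreg, hrank, hsup⟩

lemma inv_le_linPoint (ha : a ∈ s) : inv a ≤ linPoint s reg rank inv a :=
  Finset.le_sup (by simp [ha])

lemma linPoint_le_linPoint (hreg : reg a = reg b) (hrank : rank a ≤ rank b) :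
    linPoint s reg rank inv a ≤ linPoint s reg rank inv b := by
  refine Finset.sup_mono (Finset.monotone_filter_right s fun c _ hc => ?_)
  exact ⟨hc.1.trans hreg, hc.2.trans hrank⟩

lemma linKey_lt_of_rank_lt (hreg : reg a = reg b) (hrank : rank a < rank b) :
    linKey s reg rank inv a < linKey s reg rank inv b :=
  Prod.Lex.toLex_lt_toLex'.2 ⟨linPoint_le_linPoint hreg hrank.le, fun _ => hrank⟩

lemma linKey_lt_of_res_lt_inv
    (hrank : ∀ c ∈ s, reg a = reg c → res a < inv c → rank a < rank c)
    (ha : a ∈ s) (hb : b ∈ s) (hab : res a < inv b) :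
    linKey s reg rank inv a < linKey s reg rank inv b := by
  obtain ⟨c, hc, hreg, hca, hpoint⟩ := exists_linPoint_eq (reg := reg) (rank := rank)
    (inv := inv) ha
  have hcres : inv c ≤ res a := le_of_not_gt fun h => (hrank c hc hreg.symm h).not_ge hca
  refine Prod.Lex.toLex_lt_toLex.2 (Or.inl ?_)
  calc linPoint s reg rank inv a = inv c := hpoint
    _ ≤ res a := hcres
    _ < inv b := hab
    _ ≤ linPoint s reg rank inv b := inv_le_linPoint hb

lemma linKey_injOn (hinv : Set.InjOn inv s)
    (hrank : ∀ a ∈ s, ∀ b ∈ s, reg a = reg b → rank a = rank b → a = b) :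
    Set.InjOn (linKey s reg rank inv) s := by
  intro a ha b hb hab
  obtain ⟨hpoint, hrank_eq⟩ := Prod.ext_iff.1 (toLex.injective hab)
  obtain ⟨c, hc, hca, -, hc_eq⟩ := exists_linPoint_eq (reg := reg) (rank := rank) (inv := inv) ha
  obtain ⟨d, hd, hdb, -, hd_eq⟩ := exists_linPoint_eq (reg := reg) (rank := rank) (inv := inv) hb
  have hcd : c = d := hinv hc hd (hc_eq.symm.trans (hpoint.trans hd_eq))
  exact hrank a ha b hb (hca.symm.trans (hcd ▸ hdb)) hrank_eq

end LinearizationKey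

/-- `e` invokes a write to the register `x`. -/
abbrev IsWriteTo (x : ℕ) (e : Event) : Prop :=
  e.isInv = true ∧ e.isRead = false ∧ e.reg = x

/-- The content of the register `x` after the writes of `A` have been executed in the order of
their invocations, starting from the initial value `0`. -/
def valueAfter (A : Hist) (x : ℕ) : ℤ :=
  A.foldl (fun v e => if IsWriteTo x e then e.value else v) 0

lemma valueAfter_concat (A : Hist) (e : Event) (x : ℕ) :
    valueAfter (A ++ [e]) x = if IsWriteTo x e then e.value else valueAfter A x := by
  simp [valueAfter]

lemma valueAfter_regSub (A : Hist) (x : ℕ) : valueAfter (regSub A x) x = valueAfter A x := by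
  unfold valueAfter regSub
  rw [foldl_filter]
  congr! 3 with v e
  grind

lemma valueAfter_take_eq_iff (S : Hist) (x : ℕ) (v : ℤ) {k : ℕ} (hk : k ≤ S.length) :
    valueAfter (S.take k) x = v ↔
      (∃ j, ∃ hj : j < k, IsWriteTo x S[j] ∧ S[j].value = v ∧
        ∀ l, j < l → ∀ hl : l < k, ¬ IsWriteTo x S[l]) ∨
      (v = 0 ∧ ∀ j, ∀ hj : j < k, ¬ IsWriteTo x S[j]) := by
  induction k with
  | zero => simpa [valueAfter] using eq_comm
  | succ k ih =>
    rw [take_succ_eq_append_getElem hk, valueAfter_concat]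
    split_ifs with hwrite
    · -- The last write is at `k`, so neither the witness `j < k` nor the initial value is possible.
      grind
    · rw [ih (by omega)]
      grind

lemma legal_iff_valueAfter_take (S : Hist) :
    Legal S ↔ ∀ k, ∀ hk : k < S.length, S[k].isInv = true → S[k].isRead = true →
      valueAfter (S.take k) S[k].reg = S[k].value := by
  simp only [Legal, Fin.forall_iff, Fin.exists_iff, get_eq_getElem, Fin.mk_lt_mk]
  refine forall₄_congr fun k hk _ _ => ?_
  rw [valueAfter_take_eq_iff _ _ _ hk.le]
  grind

lemma legal_concat (S : Hist) (e : Event) :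
    Legal (S ++ [e]) ↔
      Legal S ∧ (e.isInv = true → e.isRead = true → valueAfter S e.reg = e.value) := by
  simp only [legal_iff_valueAfter_take, length_append, length_singleton, Nat.forall_lt_succ_right']
  refine and_congr (forall₂_congr fun k hk => ?_) (by simp)
  rw [getElem_append_left hk, take_append_of_le_length hk.le]

lemma legal_iff_forall_regSub (S : Hist) : Legal S ↔ ∀ x, Legal (regSub S x) := by
  induction S using List.reverseRecOn with
  | nil => simp [Legal, regSub]
  | append_singleton S e ih =>
    have legal_regSub_concat (x : ℕ) : Legal (regSub (S ++ [e]) x) ↔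
        Legal (regSub S x) ∧ (e.reg = x → e.isInv = true → e.isRead = true →
          valueAfter S x = e.value) := by
      by_cases hx : e.reg = x
      · have hsub : regSub (S ++ [e]) x = regSub S x ++ [e] := by simp [regSub, hx]
        simp [hsub, legal_concat, hx, valueAfter_regSub]
      · have hsub : regSub (S ++ [e]) x = regSub S x := by simp [regSub, hx]
        simp [hsub, hx]
    simp only [legal_regSub_concat, legal_concat, forall_and, forall_eq', ih]

/-- The response event matching the invocation event `e`. -/
def response (e : Event) : Event := { e with isInv := false }

/-- The invocation events of `H`; they stand for the operations of `H`. -/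
def invocations (H : Hist) : Hist := H.filter (·.isInv)

/-- The complete sequential history executing, one after another, the operations whose invocation
events are listed in `L`. -/
def seqHist (L : Hist) : Hist := L.flatMap fun e => [e, response e]

@[simp]
lemma response_isInv (e : Event) : (response e).isInv = false := rfl

lemma seqHist_cons (a : Event) (L : Hist) : seqHist (a :: L) = a :: response a :: seqHist L := rfl

lemma matches_iff {a r : Event} : Matches a r ↔ a.isInv = true ∧ r = response a := by
  cases a; cases r; grind [Matches, response]

lemma response_inj {a b : Event} (ha : a.isInv = true) (hb : b.isInv = true) :
    response a = response b ↔ a = b := by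
  cases a; cases b; simp_all [response]

lemma mem_invocations {H : Hist} {e : Event} : e ∈ invocations H ↔ e ∈ H ∧ e.isInv = true :=
  mem_filter

section SeqHist

variable {L : Hist} {a b : Event}

lemma isSequential_seqHist (hL : ∀ a ∈ L, a.isInv = true) : IsSequential (seqHist L) := by
  induction L with
  | nil => exact .nil
  | cons a L ih =>
    rw [forall_mem_cons] at hL
    exact .cons a (response a) (seqHist L) (matches_iff.2 ⟨hL.1, rfl⟩) (ih hL.2)

lemma filter_seqHist (L : Hist) {q : Event → Bool} (hq : ∀ e, q (response e) = q e) :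
    (seqHist L).filter q = seqHist (L.filter q) := by
  induction L with
  | nil => rfl
  | cons a L ih =>
    rw [seqHist_cons]
    cases hqa : q a <;> simp [hq, hqa, ih, seqHist_cons]

lemma pair_invocation_response_sublist_seqHist (ha : a ∈ L) : [a, response a] <+ seqHist L := by
  simpa [seqHist] using (singleton_sublist.2 ha).flatMap fun e => [e, response e]

lemma pair_response_invocation_sublist_seqHist (hab : [a, b] <+ L) :
    [response a, b] <+ seqHist L := by
  have h : [a, response a, b, response b] <+ seqHist L := hab.flatMap fun e => [e, response e]
  exact (show [response a, b] <+ [a, response a, b, response b] by simp).trans h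

end SeqHist

namespace IsSequential

variable {S : Hist}

protected lemma filter (hS : IsSequential S) {q : Event → Bool}
    (hq : ∀ e, q (response e) = q e) : IsSequential (S.filter q) := by
  induction hS with
  | nil => exact .nil
  | single e he => cases hqe : q e <;> simp [hqe, IsSequential.nil, IsSequential.single e he]
  | cons a r S hmatch _ ih =>
    obtain ⟨-, rfl⟩ := matches_iff.1 hmatch
    cases hqa : q a
    · simpa [hq, hqa] using ih
    · simpa [hq, hqa] using IsSequential.cons a _ _ hmatch ih

lemma exists_eq_response (hS : IsSequential S) {r : Event} (hr : r ∈ S)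
    (hres : r.isInv = false) : ∃ a ∈ S, a.isInv = true ∧ r = response a := by
  induction hS with
  | nil => simp at hr
  | single e he => simp_all
  | cons a r' S hmatch _ ih =>
    obtain ⟨ha, rfl⟩ := matches_iff.1 hmatch
    rcases mem_cons.1 hr with rfl | hr
    · simp [ha] at hres
    · rcases mem_cons.1 hr with rfl | hr
      · exact ⟨a, by simp, ha, rfl⟩
      · obtain ⟨b, hb, hb'⟩ := ih hr
        exact ⟨b, by simp [hb], hb'⟩

lemma seqHist_invocations (hS : IsSequential S) (hnodup : S.Nodup) (hcom : Complete S) :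
    seqHist (invocations S) = S := by
  induction hS with
  | nil => rfl
  | single e he =>
    obtain ⟨r, hr, -, hres, -⟩ := hcom e (by simp) he
    simp_all
  | cons a r S hmatch _ ih =>
    obtain ⟨ha, rfl⟩ := matches_iff.1 hmatch
    simp only [nodup_cons, mem_cons, not_or] at hnodup
    obtain ⟨⟨-, haS⟩, -, hnodup⟩ := hnodup
    have hcomS : Complete S := by
      intro e heS he
      obtain ⟨r, hr, hmatch⟩ := hcom e (by simp [heS]) he
      obtain ⟨-, rfl⟩ := matches_iff.1 hmatch
      have hne_inv : response e ≠ a := fun h => by simp [← h] at ha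
      have hne_res : response e ≠ response a := fun h =>
        haS ((response_inj he ha).1 h ▸ heS)
      exact ⟨response e, by simpa [hne_inv, hne_res] using hr, hmatch⟩
    have hinv : invocations (a :: response a :: S) = a :: invocations S := by
      simp [invocations, ha]
    rw [hinv, seqHist_cons, ih hnodup hcomS]

end IsSequential

protected lemma Complete.filter {H : Hist} (hH : Complete H) {q : Event → Bool}
    (hq : ∀ e, q (response e) = q e) : Complete (H.filter q) := by
  intro e he hinv
  obtain ⟨heH, hqe⟩ := mem_filter.1 he
  obtain ⟨r, hr, hmatch⟩ := hH e heH hinv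
  obtain ⟨-, rfl⟩ := matches_iff.1 hmatch
  exact ⟨response e, mem_filter.2 ⟨hr, (hq e).trans hqe⟩, hmatch⟩

protected lemma Complete.perm {S H : Hist} (hH : Complete H) (hperm : S ~ H) : Complete S := by
  intro e he hinv
  obtain ⟨r, hr, hmatch⟩ := hH e (hperm.mem_iff.1 he) hinv
  exact ⟨r, hperm.mem_iff.2 hr, hmatch⟩

namespace UniqueEvents

variable {H : Hist}

protected lemma nodup (hH : UniqueEvents H) : H.Nodup :=
  Pairwise.imp (fun hab h => hab ⟨congrArg Event.op h, congrArg Event.isInv h⟩) hH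

lemma eq_of_mem (hH : UniqueEvents H) {a b : Event} (ha : a ∈ H) (hb : b ∈ H)
    (hop : a.op = b.op) (hinv : a.isInv = b.isInv) : a = b := by
  have : Std.Symm fun a b : Event => ¬(a.op = b.op ∧ a.isInv = b.isInv) :=
    ⟨fun _ _ h h' => h ⟨h'.1.symm, h'.2.symm⟩⟩
  by_contra hne
  exact Pairwise.forall hH ha hb hne ⟨hop, hinv⟩

protected lemma filter (hH : UniqueEvents H) (q : Event → Bool) : UniqueEvents (H.filter q) :=
  Pairwise.filter q hH

protected lemma perm {S : Hist} (hH : UniqueEvents H) (hperm : S ~ H) : UniqueEvents S :=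
  (hperm.pairwise_iff fun h h' => h ⟨h'.1.symm, h'.2.symm⟩).2 hH

end UniqueEvents

protected lemma HEquiv.perm {S H : Hist} (h : HEquiv S H) : S ~ H := by
  refine perm_iff_count.2 fun e => ?_
  have hcount (A : Hist) : (procSub A e.proc).count e = A.count e := count_filter (by simp)
  rw [← hcount S, h e.proc, hcount H]

protected lemma HEquiv.filter {S H : Hist} (h : HEquiv S H) (q : Event → Bool) :
    HEquiv (S.filter q) (H.filter q) := fun p => by
  have hcomm (A : Hist) : procSub (A.filter q) p = (procSub A p).filter q := filter_comm _ _ _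
  rw [hcomm, h p, hcomm]

lemma opBefore_iff_exists_pair_sublist {H : Hist} {o₁ o₂ : ℕ} :
    OpBefore H o₁ o₂ ↔ ∃ r b : Event, [r, b] <+ H ∧
      r.op = o₁ ∧ r.isInv = false ∧ b.op = o₂ ∧ b.isInv = true := by
  have h := (pairwise_iff_get (l := H) (R := fun r b => ¬(r.op = o₁ ∧ r.isInv = false ∧
    b.op = o₂ ∧ b.isInv = true))).symm.trans pairwise_iff_forall_sublist
  rw [← not_iff_not]
  simpa only [OpBefore, not_exists, not_and] using h

lemma UniqueEvents.opBefore_iff_pair_sublist {H : Hist} (hH : UniqueEvents H) {r b : Event}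
    (hr : r ∈ H) (hb : b ∈ H) (hres : r.isInv = false) (hinv : b.isInv = true) :
    OpBefore H r.op b.op ↔ [r, b] <+ H := by
  rw [opBefore_iff_exists_pair_sublist]
  refine ⟨?_, fun h => ⟨r, b, h, rfl, hres, rfl, hinv⟩⟩
  rintro ⟨r', b', h, hr'op, hr'res, hb'op, hb'inv⟩
  obtain rfl : r' = r := hH.eq_of_mem (h.subset (by simp)) hr hr'op (hr'res.trans hres.symm)
  obtain rfl : b' = b := hH.eq_of_mem (h.subset (by simp)) hb hb'op (hb'inv.trans hinv.symm)
  exact h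

lemma opBefore_regSub_iff {H : Hist} {x o₁ o₂ : ℕ} :
    OpBefore (regSub H x) o₁ o₂ ↔ ∃ r b : Event, [r, b] <+ H ∧ r.reg = x ∧ b.reg = x ∧
      r.op = o₁ ∧ r.isInv = false ∧ b.op = o₂ ∧ b.isInv = true := by
  simp [opBefore_iff_exists_pair_sublist, regSub, pair_sublist_filter_iff, and_assoc]

/-- `S` is a linearization of `H`, that is, a witness for `LIN H`. -/
structure IsLinearization (H S : Hist) : Prop where
  isSequential : IsSequential S
  legal : Legal S
  hEquiv : HEquiv S H
  opBefore : ∀ o₁ o₂ : ℕ, OpBefore H o₁ o₂ → OpBefore S o₁ o₂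

lemma lin_iff_exists_isLinearization {H : Hist} : LIN H ↔ ∃ S, IsLinearization H S :=
  exists_congr fun _ => ⟨fun ⟨h₁, h₂, h₃, h₄⟩ => ⟨h₁, h₂, h₃, h₄⟩,
    fun ⟨h₁, h₂, h₃, h₄⟩ => ⟨h₁, h₂, h₃, h₄⟩⟩

namespace IsLinearization

variable {H S : Hist}

lemma restrict_reg (hS : IsLinearization H S) (hcoh : Coherent H) (x : ℕ) :
    IsLinearization (regSub H x) (regSub S x) where
  isSequential := hS.isSequential.filter fun _ => rfl
  legal := (legal_iff_forall_regSub S).1 hS.legal x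
  hEquiv := hS.hEquiv.filter _
  opBefore o₁ o₂ h := by
    obtain ⟨r, b, hH, hrx, hbx, hr, hres, hb, hinv⟩ := opBefore_regSub_iff.1 h
    obtain ⟨r', b', hS', hr', hres', hb', hinv'⟩ := opBefore_iff_exists_pair_sublist.1 <|
      hS.opBefore o₁ o₂ <| opBefore_iff_exists_pair_sublist.2 ⟨r, b, hH, hr, hres, hb, hinv⟩
    have reg_eq {e e' : Event} (he : e ∈ [r, b]) (he' : e' ∈ [r', b']) (hop : e'.op = e.op) :
        e'.reg = e.reg :=
      (hcoh e' (hS.hEquiv.perm.subset (hS'.subset he')) e (hH.subset he) hop).2.1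
    have hr'x : r'.reg = x := (reg_eq (by simp) (by simp) (hr'.trans hr.symm)).trans hrx
    have hb'x : b'.reg = x := (reg_eq (by simp) (by simp) (hb'.trans hb.symm)).trans hbx
    exact opBefore_regSub_iff.2 ⟨r', b', hS', hr'x, hb'x, hr', hres', hb', hinv'⟩

lemma uniqueEvents (hS : IsLinearization H S) (huniq : UniqueEvents H) : UniqueEvents S :=
  huniq.perm hS.hEquiv.perm

lemma seqHist_invocations (hS : IsLinearization H S) (huniq : UniqueEvents H)
    (hcom : Complete H) : seqHist (invocations S) = S :=
  hS.isSequential.seqHist_invocations (hS.uniqueEvents huniq).nodup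
    (hcom.perm hS.hEquiv.perm)

lemma idxOf_lt_of_response_sublist (hS : IsLinearization H S) (huniq : UniqueEvents H)
    (hcom : Complete H) {a b : Event} (ha : a ∈ invocations H) (hb : b.isInv = true)
    (hab : [response a, b] <+ H) : S.idxOf a < S.idxOf b := by
  have hnodup := (hS.uniqueEvents huniq).nodup
  have mem_S {e : Event} : e ∈ H → e ∈ S := hS.hEquiv.perm.mem_iff.2
  have haS : a ∈ S := mem_S (mem_invocations.1 ha).1
  have hresH : response a ∈ H := hab.subset (by simp)
  have hbH : b ∈ H := hab.subset (by simp)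
  have invocation_lt_response : S.idxOf a < S.idxOf (response a) := by
    have h := pair_invocation_response_sublist_seqHist
      (mem_invocations.2 ⟨haS, (mem_invocations.1 ha).2⟩)
    rw [hS.seqHist_invocations huniq hcom] at h
    exact (pair_sublist_iff_idxOf_lt hnodup haS (mem_S hresH)).1 h
  have response_lt : S.idxOf (response a) < S.idxOf b := by
    have h := hS.opBefore _ _ ((huniq.opBefore_iff_pair_sublist hresH hbH rfl hb).2 hab)
    rw [(hS.uniqueEvents huniq).opBefore_iff_pair_sublist (mem_S hresH) (mem_S hbH) rfl hb] at h
    exact (pair_sublist_iff_idxOf_lt hnodup (mem_S hresH) (mem_S hbH)).1 h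
  exact invocation_lt_response.trans response_lt

end IsLinearization

section Merge

variable {H : Hist} {S : ℕ → Hist}

/-- The key by which the operations of `H` are sorted in order to merge the linearizations `S x` of
the register subhistories `H|x`; times are positions in `H`. -/
def mergeKey (H : Hist) (S : ℕ → Hist) : Event → ℕ ×ₗ ℕ :=
  linKey (invocations H).toFinset Event.reg (fun a => (S a.reg).idxOf a) (H.idxOf ·)

lemma mem_linearization_iff (hS : ∀ x, IsLinearization (regSub H x) (S x)) {x : ℕ} {e : Event} :
    e ∈ S x ↔ e ∈ H ∧ e.reg = x := by
  rw [(hS x).hEquiv.perm.mem_iff, regSub, mem_filter, decide_eq_true_iff]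

lemma mergeKey_injOn (hS : ∀ x, IsLinearization (regSub H x) (S x)) :
    Set.InjOn (mergeKey H S) (invocations H).toFinset := by
  have mem_H {a : Event} (ha : a ∈ (invocations H).toFinset) : a ∈ H :=
    (mem_invocations.1 (mem_toFinset.1 ha)).1
  refine linKey_injOn (fun a ha b _ hab => (idxOf_inj (mem_H ha)).1 hab) ?_
  intro a ha b _ hreg hrank
  rw [← hreg] at hrank
  exact (idxOf_inj ((mem_linearization_iff hS).2 ⟨mem_H ha, rfl⟩)).1 hrank

lemma mergeKey_lt_of_sublist_linearization (huniq : UniqueEvents H)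
    (hS : ∀ x, IsLinearization (regSub H x) (S x)) {x : ℕ} {a b : Event}
    (hab : [a, b] <+ S x) : mergeKey H S a < mergeKey H S b := by
  have ha : a ∈ S x := hab.subset (by simp)
  have hb : b ∈ S x := hab.subset (by simp)
  have hax : a.reg = x := ((mem_linearization_iff hS).1 ha).2
  have hbx : b.reg = x := ((mem_linearization_iff hS).1 hb).2
  have hnodup : (S x).Nodup := ((hS x).uniqueEvents (huniq.filter _)).nodup
  refine linKey_lt_of_rank_lt (hax.trans hbx.symm) ?_
  rw [hax, hbx]
  exact (pair_sublist_iff_idxOf_lt hnodup ha hb).1 hab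

lemma mergeKey_lt_of_response_sublist (huniq : UniqueEvents H) (hcom : Complete H)
    (hS : ∀ x, IsLinearization (regSub H x) (S x)) {a b : Event} (ha : a ∈ invocations H)
    (hb : b.isInv = true) (hab : [response a, b] <+ H) : mergeKey H S a < mergeKey H S b := by
  have hresH : response a ∈ H := hab.subset (by simp)
  have hbH : b ∈ H := hab.subset (by simp)
  refine linKey_lt_of_res_lt_inv (res := fun a => H.idxOf (response a)) ?_ (mem_toFinset.2 ha)
    (mem_toFinset.2 (mem_invocations.2 ⟨hbH, hb⟩))
    ((pair_sublist_iff_idxOf_lt huniq.nodup hresH hbH).1 hab)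
  intro c hc hreg hac
  obtain ⟨hcH, hcinv⟩ := mem_invocations.1 (mem_toFinset.1 hc)
  obtain ⟨haH, hainv⟩ := mem_invocations.1 ha
  have hsub : [response a, c] <+ regSub H a.reg := pair_sublist_filter_iff.2
    ⟨(pair_sublist_iff_idxOf_lt huniq.nodup hresH hcH).2 hac, by simp [response], by simp [hreg]⟩
  have ha_reg : a ∈ invocations (regSub H a.reg) := by simp [mem_invocations, regSub, haH, hainv]
  simpa only [← hreg] using
    (hS a.reg).idxOf_lt_of_response_sublist (huniq.filter _) (hcom.filter fun _ => rfl)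
      ha_reg hcinv hsub

lemma filter_seqHist_eq_of_pairwise_lt {β : Type*} [Preorder β] {f : Event → β} {M T : Hist}
    {q : Event → Bool} (hq : ∀ e, q (response e) = q e)
    (hM : ∀ a, a ∈ M ↔ a ∈ invocations H) (hMf : M.Pairwise (f · < f ·))
    (hT : ∀ e, e ∈ T ↔ e ∈ H.filter q) (hTf : (invocations T).Pairwise (f · < f ·))
    (hTseq : seqHist (invocations T) = T) : (seqHist M).filter q = T := by
  have hfilter : M.filter q = invocations T := by
    refine eq_of_pairwise_lt_of_mem_iff (hMf.filter q) hTf fun a => ?_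
    simp only [mem_filter, hM, mem_invocations, hT]
    tauto
  rw [filter_seqHist M hq, hfilter, hTseq]

lemma regSub_seqHist_eq (huniq : UniqueEvents H) (hcom : Complete H)
    (hS : ∀ x, IsLinearization (regSub H x) (S x)) {M : Hist}
    (hM : ∀ a, a ∈ M ↔ a ∈ invocations H)
    (hMkey : M.Pairwise (mergeKey H S · < mergeKey H S ·)) (x : ℕ) :
    regSub (seqHist M) x = S x := by
  refine filter_seqHist_eq_of_pairwise_lt (fun _ => rfl) hM hMkey
    (fun _ => (hS x).hEquiv.perm.mem_iff) ?_
    ((hS x).seqHist_invocations (huniq.filter _) (hcom.filter fun _ => rfl))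
  exact pairwise_iff_forall_sublist.2 fun hab =>
    mergeKey_lt_of_sublist_linearization huniq hS (hab.trans filter_sublist)

lemma procSub_seqHist_eq (huniq : UniqueEvents H) (hseq : ∀ p, IsSequential (procSub H p))
    (hcom : Complete H) (hS : ∀ x, IsLinearization (regSub H x) (S x)) {M : Hist}
    (hM : ∀ a, a ∈ M ↔ a ∈ invocations H)
    (hMkey : M.Pairwise (mergeKey H S · < mergeKey H S ·)) (p : ℕ) :
    procSub (seqHist M) p = procSub H p := by
  have hseqHist : seqHist (invocations (procSub H p)) = procSub H p :=
    (hseq p).seqHist_invocations (huniq.filter _).nodup (hcom.filter fun _ => rfl)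
  refine filter_seqHist_eq_of_pairwise_lt (fun _ => rfl) hM hMkey (fun _ => Iff.rfl) ?_ hseqHist
  refine pairwise_iff_forall_sublist.2 fun {a b} hab => ?_
  have ha : a ∈ invocations (procSub H p) := hab.subset (by simp)
  have hb : b ∈ invocations (procSub H p) := hab.subset (by simp)
  have hbefore := pair_response_invocation_sublist_seqHist hab
  rw [hseqHist] at hbefore
  exact mergeKey_lt_of_response_sublist huniq hcom hS ((filter_sublist.filter _).subset ha)
    (mem_invocations.1 hb).2 (hbefore.trans filter_sublist)

lemma opBefore_seqHist_of_opBefore (huniq : UniqueEvents H) (hseq : ∀ p, IsSequential (procSub H p))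
    (hcom : Complete H) (hS : ∀ x, IsLinearization (regSub H x) (S x)) {M : Hist}
    (hM : ∀ a, a ∈ M ↔ a ∈ invocations H)
    (hMkey : M.Pairwise (mergeKey H S · < mergeKey H S ·)) {o₁ o₂ : ℕ} (h : OpBefore H o₁ o₂) :
    OpBefore (seqHist M) o₁ o₂ := by
  obtain ⟨r, b, hrb, hr, hres, hb, hinv⟩ := opBefore_iff_exists_pair_sublist.1 h
  have hrH : r ∈ procSub H r.proc := mem_filter.2 ⟨hrb.subset (by simp), by simp⟩
  obtain ⟨a, haH, hainv, rfl⟩ := (hseq r.proc).exists_eq_response hrH hres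
  have ha : a ∈ invocations H := mem_invocations.2 ⟨(mem_filter.1 haH).1, hainv⟩
  have hbM : b ∈ M := (hM b).2 (mem_invocations.2 ⟨hrb.subset (by simp), hinv⟩)
  have hab : [a, b] <+ M := (pair_sublist_iff_lt hMkey ((hM a).2 ha) hbM).2
    (mergeKey_lt_of_response_sublist huniq hcom hS ha hinv hrb)
  exact opBefore_iff_exists_pair_sublist.2
    ⟨response a, b, pair_response_invocation_sublist_seqHist hab, hr, hres, hb, hinv⟩

lemma exists_isLinearization_of_forall_regSub (huniq : UniqueEvents H)
    (hseq : ∀ p, IsSequential (procSub H p)) (hcom : Complete H)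
    (hS : ∀ x, IsLinearization (regSub H x) (S x)) : ∃ T, IsLinearization H T := by
  obtain ⟨M, hM, hMkey⟩ := exists_pairwise_lt_of_injOn (mergeKey_injOn hS)
  simp only [mem_toFinset] at hM
  refine ⟨seqHist M, isSequential_seqHist fun a ha => (mem_invocations.1 ((hM a).1 ha)).2, ?_,
    procSub_seqHist_eq huniq hseq hcom hS hM hMkey,
    fun _ _ => opBefore_seqHist_of_opBefore huniq hseq hcom hS hM hMkey⟩
  rw [legal_iff_forall_regSub]
  intro x
  rw [regSub_seqHist_eq huniq hcom hS hM hMkey]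
  exact (hS x).legal

end Merge

/-- A well-formed complete history `H` of read/write register
operations is linearizable if and only if, for every register `x`, the
register subhistory `H|x` is linearizable. -/
theorem lin_compositional (H : Hist) (hwf : WellFormed H) (hcom : Complete H) :
    LIN H ↔ ∀ x : ℕ, LIN (regSub H x) := by
  simp only [lin_iff_exists_isLinearization]
  obtain ⟨huniq, hcoh, hseq⟩ := hwf
  constructor
  · rintro ⟨S, hS⟩ x
    exact ⟨regSub S x, hS.restrict_reg hcoh x⟩
  · intro h
    choose S hS using h
    exact exists_isLinearization_of_forall_regSub huniq hseq hcom hS
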